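/- Fix a balanced σ ∈ {±1}^n and let ℋ be sampled from HSBM(n,p,q;k) conditionally on σ. Then the variance parameter σ² := ‖ ∑_{e ∈ C([n],k)} E[((A_ℋ)_e − E(A_ℋ)_e)²] · (Π((1_eᵀσ_e)·diag(σ_e) − σ_eσ_eᵀ)Π)² ‖ (operator norm) satisfies σ² ≤ 2(k−1)((k/2^k)α + (1 − k/2^k)β) log n + O(log n / n). -/

import Mathlib

open Finset Filter Matrix

open scoped Classical

/-- The `k`-element subsets of `[n]`, i.e. the potential hyperedges. -/
abbrev KSet (n k : ℕ) := {e : Finset (Fin n) // e.card = k}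

/-- A `±1` label vector (encoded by `Bool`) is balanced if it has equally many
`+1`'s (`true`) and `-1`'s (`false`). -/
abbrev balanced {n : ℕ} (σ : Fin n → Bool) : Prop :=
  2 * (Finset.univ.filter (fun i => σ i = true)).card = n

/-- `e` is in-cluster w.r.t. `σ`: `σ` is constant on `e`. -/
abbrev inCluster {n : ℕ} (σ : Fin n → Bool) (e : Finset (Fin n)) : Prop :=
  ∀ i ∈ e, ∀ j ∈ e, σ i = σ j

/-- Probability that `e` appears as an edge, given the labels `σ`. -/
noncomputable def edgeP {n : ℕ} (p q : ℝ) (σ : Fin n → Bool) (e : Finset (Fin n)) : ℝ :=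
  if inCluster σ e then p else q

/-- Probability of observing exactly the hypergraph with edge-indicator `E`, given labels `σ`
(edges appear independently). -/
noncomputable def hypProb {n k : ℕ} (p q : ℝ) (σ : Fin n → Bool) (E : KSet n k → Bool) : ℝ :=
  ∏ e : KSet n k, if E e then edgeP p q σ e.1 else 1 - edgeP p q σ e.1

/-- Uniform prior on balanced label vectors. -/
noncomputable def sigProb (n : ℕ) (σ : Fin n → Bool) : ℝ :=
  if balanced σ then 1 / ((Finset.univ.filter (fun τ : Fin n → Bool => balanced τ)).card : ℝ)
  else 0

/-- Probability of an event `P` under the joint law `HSBM(n,p,q;k)` of `(σ, ℋ)`. -/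
noncomputable def prEvent (n k : ℕ) (p q : ℝ)
    (P : (Fin n → Bool) → (KSet n k → Bool) → Prop) : ℝ :=
  ∑ σ : Fin n → Bool, ∑ E : KSet n k → Bool,
    sigProb n σ * hypProb p q σ E * (if P σ E then 1 else 0)

/-- Global sign flip. -/
def negB {n : ℕ} (σ : Fin n → Bool) : Fin n → Bool := fun i => !(σ i)

/-- The edge probability parameter `α · log n / C(n-1, k-1)`. -/
noncomputable def pParam (k : ℕ) (α : ℝ) (n : ℕ) : ℝ :=
  α * Real.log n / ((n - 1).choose (k - 1) : ℝ)

/-- The real `±1` vector associated to a Boolean label vector. -/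
def sgn {n : ℕ} (σ : Fin n → Bool) : Fin n → ℝ := fun i => if σ i then 1 else -1

/-- The rank-one matrix `σσᵀ`. -/
noncomputable def outer {n : ℕ} (σ : Fin n → Bool) : Matrix (Fin n) (Fin n) ℝ :=
  Matrix.of fun i j => sgn σ i * sgn σ j

/-- The weighted adjacency matrix `W(H)`: `W i j` is the number of hyperedges containing
both `i` and `j` (zero on the diagonal). -/
noncomputable def Wmat {n k : ℕ} (E : KSet n k → Bool) : Matrix (Fin n) (Fin n) ℝ :=
  Matrix.of fun i j => if i = j then 0 else
    ((Finset.univ.filter (fun e : KSet n k => E e = true ∧ i ∈ e.1 ∧ j ∈ e.1)).card : ℝ)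

/-- Feasibility for the SDP relaxation: `X ⪰ 0`, unit diagonal, `⟨X, 𝟙𝟙ᵀ⟩ = 0`. -/
def sdpFeasible {n : ℕ} (X : Matrix (Fin n) (Fin n) ℝ) : Prop :=
  X.PosSemidef ∧ (∀ i, X i i = 1) ∧ (∑ i, ∑ j, X i j) = 0

/-- The SDP objective `⟨W, X⟩`. -/
noncomputable def sdpObj {n : ℕ} (W X : Matrix (Fin n) (Fin n) ℝ) : ℝ :=
  ∑ i, ∑ j, W i j * X i j

/-- `Xs` is the unique optimal solution of the SDP with input `W`. -/
def sdpUniqueOpt {n : ℕ} (W Xs : Matrix (Fin n) (Fin n) ℝ) : Prop :=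
  sdpFeasible Xs ∧ ∀ X, sdpFeasible X → X ≠ Xs → sdpObj W X < sdpObj W Xs

/-- `Γ = diag(σ) W diag(σ)`. -/
noncomputable def GammaM {n : ℕ} (σ : Fin n → Bool) (W : Matrix (Fin n) (Fin n) ℝ) :
    Matrix (Fin n) (Fin n) ℝ :=
  Matrix.diagonal (sgn σ) * W * Matrix.diagonal (sgn σ)

/-- The Laplacian `L_Γ = diag(Γ𝟙) - Γ`. -/
noncomputable def LGamma {n : ℕ} (σ : Fin n → Bool) (W : Matrix (Fin n) (Fin n) ℝ) :
    Matrix (Fin n) (Fin n) ℝ :=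
  Matrix.diagonal (fun i => ∑ j, GammaM σ W i j) - GammaM σ W

/-- `Π = I - (1/n)𝟙𝟙ᵀ - (1/n)σσᵀ`, the projector onto `span{𝟙, σ}ᗮ`. -/
noncomputable def PiM {n : ℕ} (σ : Fin n → Bool) : Matrix (Fin n) (Fin n) ℝ :=
  1 - (n : ℝ)⁻¹ • Matrix.of (fun _ _ => (1 : ℝ)) - (n : ℝ)⁻¹ • outer σ

/-- The third-smallest eigenvalue of a symmetric matrix, via the Courant–Fischer
max–min characterization over subspaces of dimension `n - 2`. -/
noncomputable def lambda3 {n : ℕ} (M : Matrix (Fin n) (Fin n) ℝ) : ℝ :=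
  sSup {r : ℝ | ∃ V : Submodule ℝ (Fin n → ℝ), Module.finrank ℝ V = n - 2 ∧
    ∀ x ∈ V, r * (∑ i, x i ^ 2) ≤ x ⬝ᵥ M.mulVec x}

/-- `σ_e = diag(σ) 1_e`: the signed indicator vector of the edge `e`. -/
noncomputable def sigE {n : ℕ} (σ : Fin n → Bool) (e : Finset (Fin n)) : Fin n → ℝ :=
  fun i => if i ∈ e then sgn σ i else 0

/-- The matrix `(1_eᵀ σ_e) · diag(σ_e) - σ_e σ_eᵀ`. -/
noncomputable def Amat {n : ℕ} (σ : Fin n → Bool) (e : Finset (Fin n)) :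
    Matrix (Fin n) (Fin n) ℝ :=
  (∑ i ∈ e, sgn σ i) • Matrix.diagonal (sigE σ e) -
    Matrix.of fun i j => sigE σ e i * sigE σ e j

/-- The `ℓ₂ → ℓ₂` operator norm of a matrix. -/
noncomputable def opNorm {n : ℕ} (M : Matrix (Fin n) (Fin n) ℝ) : ℝ :=
  sSup {r : ℝ | ∃ x : Fin n → ℝ, (∑ i, x i ^ 2) = 1 ∧
    r = Real.sqrt (∑ i, (M.mulVec x i) ^ 2)}

/-- `∑_e Var((A_ℋ)_e) · (Π A_e Π)²`, where `Var((A_ℋ)_e) = P_e (1 - P_e)`. -/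
noncomputable def varMat (n k : ℕ) (p q : ℝ) (σ : Fin n → Bool) :
    Matrix (Fin n) (Fin n) ℝ :=
  ∑ e : KSet n k, (edgeP p q σ e.1 * (1 - edgeP p q σ e.1)) •
    ((PiM σ * Amat σ e.1 * PiM σ) * (PiM σ * Amat σ e.1 * PiM σ))

/-!
The matrix `M = ∑_e P_e A_e²`, where `A_e = (1_eᵀ σ_e) diag(σ_e) - σ_e σ_eᵀ`, is invariant under
permutations of the vertices that preserve the two clusters. On the orthogonal complement of
`span {𝟙, σ}` it therefore acts by multiplying the `j`-th coordinate by `M j j - M j j'`, where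
`j' ≠ j` is any other vertex in the cluster of `j`. Since `P_e (1 - P_e) ≤ P_e` and `Π` is a
contraction, the variance parameter is at most the largest of these multipliers.

For `j ∈ e` one has `(A_e²) j j = (1_eᵀ σ_e - σ_j)² + k - 1`. The first summand is `(k - 1)²` for
in-cluster `e`; averaged over all `e ∋ j` it is at most `k - 1`, because signs drawn without
replacement from a balanced vector are negatively correlated. As a fraction
`C(n/2 - 1, k - 1) / C(n - 1, k - 1) = 2^{-(k - 1)} + O(1/n)` of the hyperedges through `j` is
in-cluster, `M j j` yields the leading term. The entry `M j j'` only involves the hyperedges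
containing both vertices, a fraction `(k - 1) / (n - 1)` of those through `j`.
-/

lemma dotProduct_mulVec_of_isSymm {ι R : Type*} [Fintype ι] [CommSemiring R] {A : Matrix ι ι R}
    (hA : A.IsSymm) (x y : ι → R) : x ⬝ᵥ A *ᵥ y = A *ᵥ x ⬝ᵥ y := by
  rw [dotProduct_mulVec, ← mulVec_transpose, hA.eq]

section QuadraticForm

variable {ι : Type*} [Fintype ι] {M P : Matrix ι ι ℝ}

lemma sq_dotProduct_mulVec_le_of_posSemidef (hM : M.PosSemidef) (x y : ι → ℝ) :
    (x ⬝ᵥ M *ᵥ y) ^ 2 ≤ (x ⬝ᵥ M *ᵥ x) * (y ⬝ᵥ M *ᵥ y) := by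
  have hsymm : LinearMap.IsSymm (toBilin' M) := ⟨fun u v ↦ by
    simp [toBilin'_apply',
      dotProduct_mulVec_of_isSymm (isHermitian_iff_isSymm.1 hM.isHermitian) u v, dotProduct_comm]⟩
  simpa [toBilin'_apply'] using (toBilin' M).apply_sq_le_of_symm
    (fun z ↦ by simpa [toBilin'_apply'] using hM.dotProduct_mulVec_nonneg z) hsymm x y

lemma mulVec_dotProduct_mulVec_le_of_posSemidef (hM : M.PosSemidef) {c : ℝ}
    (hc : ∀ x, x ⬝ᵥ M *ᵥ x ≤ c * (x ⬝ᵥ x)) (x : ι → ℝ) :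
    M *ᵥ x ⬝ᵥ M *ᵥ x ≤ c * (x ⬝ᵥ M *ᵥ x) := by
  set y := M *ᵥ x
  obtain h0 | hpos := (dotProduct_self_star_nonneg y).eq_or_lt
  · simp [dotProduct_self_eq_zero.1 h0.symm]
  · refine le_of_mul_le_mul_right ?_ hpos
    have hxx : 0 ≤ x ⬝ᵥ y := hM.dotProduct_mulVec_nonneg x
    calc (y ⬝ᵥ y) * (y ⬝ᵥ y) = (x ⬝ᵥ M *ᵥ y) ^ 2 := by
          rw [dotProduct_mulVec_of_isSymm (isHermitian_iff_isSymm.1 hM.isHermitian) x, sq]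
      _ ≤ (x ⬝ᵥ y) * (y ⬝ᵥ M *ᵥ y) := sq_dotProduct_mulVec_le_of_posSemidef hM x y
      _ ≤ (x ⬝ᵥ y) * (c * (y ⬝ᵥ y)) := by gcongr; exact hc y
      _ = c * (x ⬝ᵥ y) * (y ⬝ᵥ y) := by ring

lemma mulVec_dotProduct_mulVec_le_of_isStarProjection (hP : IsStarProjection P) (x : ι → ℝ) :
    P *ᵥ x ⬝ᵥ P *ᵥ x ≤ x ⬝ᵥ x := by
  have hxP : x ⬝ᵥ P *ᵥ x = P *ᵥ x ⬝ᵥ P *ᵥ x := by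
    rw [← dotProduct_mulVec_of_isSymm (isHermitian_iff_isSymm.1 hP.isSelfAdjoint), mulVec_mulVec,
      hP.isIdempotentElem.eq]
  have hsub : 0 ≤ (x - P *ᵥ x) ⬝ᵥ (x - P *ᵥ x) := dotProduct_self_star_nonneg _
  simp only [sub_dotProduct, dotProduct_sub, dotProduct_comm (P *ᵥ x) x, hxP] at hsub
  linarith

end QuadraticForm

lemma opNorm_le_of_posSemidef {n : ℕ} {M : Matrix (Fin n) (Fin n) ℝ} (hM : M.PosSemidef) {c : ℝ}
    (hc₀ : 0 ≤ c) (hc : ∀ x, x ⬝ᵥ M *ᵥ x ≤ c * (x ⬝ᵥ x)) : opNorm M ≤ c := by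
  refine Real.sSup_le ?_ hc₀
  rintro _ ⟨x, hx, rfl⟩
  replace hx : x ⬝ᵥ x = 1 := by simpa [dotProduct, sq] using hx
  refine Real.sqrt_le_iff.2 ⟨hc₀, ?_⟩
  calc ∑ i, (M *ᵥ x) i ^ 2 = M *ᵥ x ⬝ᵥ M *ᵥ x := by simp [dotProduct, sq]
    _ ≤ c * (x ⬝ᵥ M *ᵥ x) := mulVec_dotProduct_mulVec_le_of_posSemidef hM hc x
    _ ≤ c * (c * (x ⬝ᵥ x)) := by gcongr; exact hc x
    _ = c ^ 2 := by rw [hx]; ring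

lemma opNorm_eq_zero_of_isEmpty {n : ℕ} [IsEmpty (Fin n)] (M : Matrix (Fin n) (Fin n) ℝ) :
    opNorm M = 0 := by
  simp [opNorm]

section ColorInvariant

variable {ι κ R : Type*} {c : ι → κ}

lemma apply_eq_of_submatrix_perm_eq {M : Matrix ι ι R}
    (hM : ∀ f : Equiv.Perm ι, c ∘ f = c → M.submatrix f f = M) {j i₁ i₂ : ι} (hi : c i₁ = c i₂)
    (h₁ : i₁ ≠ j) (h₂ : i₂ ≠ j) : M j i₁ = M j i₂ := by
  have hswap : c ∘ Equiv.swap i₁ i₂ = c := by simp [Equiv.comp_swap_eq_update, hi]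
  simpa [Equiv.swap_apply_of_ne_of_ne h₁.symm h₂.symm] using
    (congr_fun₂ (hM _ hswap) j i₁).symm

variable [Fintype ι] [DecidableEq κ]

lemma sum_mul_eq_zero_of_factorsThrough [NonUnitalNonAssocSemiring R] {g y : ι → R}
    (hg : g.FactorsThrough c) (hy : ∀ a, ∑ i with c i = a, y i = 0) : ∑ i, g i * y i = 0 := by
  rw [← sum_fiberwise_of_maps_to (fun i _ ↦ mem_image_of_mem c (mem_univ i))]
  refine sum_eq_zero fun a ha ↦ ?_
  obtain ⟨i₀, -, rfl⟩ := mem_image.1 ha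
  rw [sum_congr rfl fun i hi ↦ by rw [hg (mem_filter.1 hi).2], ← mul_sum, hy, mul_zero]

lemma mulVec_apply_of_submatrix_perm_eq [CommRing R] {M : Matrix ι ι R}
    (hM : ∀ f : Equiv.Perm ι, c ∘ f = c → M.submatrix f f = M) {y : ι → R}
    (hy : ∀ a, ∑ i with c i = a, y i = 0) {j j' : ι} (hne : j' ≠ j) (hj : c j' = c j) :
    (M *ᵥ y) j = (M j j - M j j') * y j := by
  have hrow : Function.FactorsThrough (fun i ↦ M j (Function.update id j j' i)) c := by
    intro i₁ i₂ h
    apply apply_eq_of_submatrix_perm_eq hM <;>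
      by_cases h₁ : i₁ = j <;> by_cases h₂ : i₂ = j <;> simp_all
  calc (M *ᵥ y) j = ∑ i, ((if i = j then M j j - M j j' else 0) * y i
        + M j (Function.update id j j' i) * y i) :=
        sum_congr rfl fun i _ ↦ by by_cases h : i = j <;> simp [h, sub_mul]
    _ = (M j j - M j j') * y j := by
        rw [sum_add_distrib, sum_mul_eq_zero_of_factorsThrough hrow hy]; simp

lemma dotProduct_mulVec_le_of_submatrix_perm_eq {M : Matrix ι ι ℝ}
    (hM : ∀ f : Equiv.Perm ι, c ∘ f = c → M.submatrix f f = M) {y : ι → ℝ}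
    (hy : ∀ a, ∑ i with c i = a, y i = 0) {b : ℝ}
    (hb : ∀ j, ∃ j', j' ≠ j ∧ c j' = c j ∧ M j j - M j j' ≤ b) :
    y ⬝ᵥ M *ᵥ y ≤ b * (y ⬝ᵥ y) := by
  rw [dotProduct, dotProduct, mul_sum]
  refine sum_le_sum fun j _ ↦ ?_
  obtain ⟨j', hne, hj, hle⟩ := hb j
  rw [mulVec_apply_of_submatrix_perm_eq hM hy hne hj]
  nlinarith [mul_self_nonneg (y j)]

end ColorInvariant

lemma cast_sub_one_mul_choose {n k : ℕ} (hn : 2 ≤ n) (hk : 2 ≤ k) :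
    ((n : ℝ) - 1) * (n - 2).choose (k - 2) = (k - 1) * (n - 1).choose (k - 1) := by
  obtain ⟨n, rfl⟩ := Nat.exists_eq_add_of_le' hn
  obtain ⟨k, rfl⟩ := Nat.exists_eq_add_of_le' hk
  have h : ((n : ℝ) + 1) * n.choose k = (n + 1).choose (k + 1) * (k + 1) := by
    exact_mod_cast Nat.add_one_mul_choose_eq n k
  simp only [Nat.add_sub_cancel, Nat.add_succ_sub_one, Nat.cast_add, Nat.cast_ofNat]
  linear_combination h

lemma sum_powersetCard_univ_map {ι R : Type*} [Fintype ι] [AddCommMonoid R] (k : ℕ)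
    (f : Equiv.Perm ι) (F : Finset ι → R) :
    ∑ e ∈ powersetCard k univ, F (e.map f.toEmbedding) = ∑ e ∈ powersetCard k univ, F e := by
  conv_rhs => rw [← map_univ_equiv f, powersetCard_map, sum_map]
  rfl

section SetFamily

variable {ι : Type*} [DecidableEq ι]

lemma sum_sq_sum_filter_mem {R : Type*} [CommRing R] {𝒜 : Finset (Finset ι)} {U : Finset ι}
    {r l : ℕ} (hr : ∀ a ∈ U, #{e ∈ 𝒜 | a ∈ e} = r)
    (hl : ∀ a ∈ U, ∀ b ∈ U, a ≠ b → #{e ∈ 𝒜 | a ∈ e ∧ b ∈ e} = l) (z : ι → R) :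
    ∑ e ∈ 𝒜, (∑ i ∈ U with i ∈ e, z i) ^ 2
      = ((r : R) - l) * ∑ i ∈ U, z i ^ 2 + l * (∑ i ∈ U, z i) ^ 2 := by
  have hcount : ∀ a ∈ U, ∀ b ∈ U,
      (#{e ∈ 𝒜 | a ∈ e ∧ b ∈ e} : R) = (if a = b then (r : R) - l else 0) + l := by
    intro a ha b hb
    obtain rfl | hab := eq_or_ne a b
    · simp [hr a ha]
    · simp [hl a ha b hb hab, hab]
  calc ∑ e ∈ 𝒜, (∑ i ∈ U with i ∈ e, z i) ^ 2
      = ∑ e ∈ 𝒜, ∑ a ∈ U, ∑ b ∈ U, if a ∈ e ∧ b ∈ e then z a * z b else 0 := by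
        simp only [sq, sum_filter, sum_mul_sum, ite_zero_mul_ite_zero]
    _ = ∑ a ∈ U, ∑ b ∈ U, (#{e ∈ 𝒜 | a ∈ e ∧ b ∈ e} : R) * (z a * z b) := by
        rw [sum_comm]
        refine sum_congr rfl fun a _ ↦ ?_
        rw [sum_comm]
        exact sum_congr rfl fun b _ ↦ by rw [← sum_filter, sum_const, nsmul_eq_mul]
    _ = ∑ a ∈ U, ∑ b ∈ U, ((if a = b then ((r : R) - l) * (z a * z b) else 0)
          + l * (z a * z b)) :=
        sum_congr rfl fun a ha ↦ sum_congr rfl fun b hb ↦ by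
          rw [hcount a ha b hb, add_mul, ite_mul, zero_mul]
    _ = ((r : R) - l) * ∑ i ∈ U, z i ^ 2 + l * (∑ i ∈ U, z i) ^ 2 := by
        rw [sq (∑ i ∈ U, z i), sum_mul_sum]
        simp [sum_add_distrib, sq, mul_sum]

lemma card_filter_subset_powersetCard_univ [Fintype ι] (k : ℕ) (s : Finset ι) :
    #{e ∈ powersetCard k univ | s ⊆ e}
      = if #s ≤ k then (Fintype.card ι - #s).choose (k - #s) else 0 := by
  split_ifs with h
  · simpa using card_filter_powersetCard_subset s univ k (subset_univ s) h
  · refine card_eq_zero.2 (filter_eq_empty_iff.2 fun e he hse ↦ h ?_)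
    exact (card_le_card hse).trans_eq (mem_powersetCard_univ.1 he)

end SetFamily

section BinomialAsymptotics

open Asymptotics

lemma isBigO_mul_cast_sub_inv {a : ℝ} (ha : 0 < a) (c : ℝ) :
    (fun m : ℕ ↦ (a * m - c)⁻¹) =O[atTop] fun m ↦ (m : ℝ)⁻¹ := by
  have hc : ∀ᶠ m : ℕ in atTop, 2 * |c| / a ≤ m := tendsto_natCast_atTop_atTop.eventually_ge_atTop _
  refine IsBigO.of_bound (2 / a) ?_
  filter_upwards [hc, eventually_gt_atTop 0] with m hm hm₀
  have hm₀' : (0 : ℝ) < m := Nat.cast_pos.2 hm₀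
  rw [div_le_iff₀ ha] at hm
  have hlow : a * m / 2 ≤ a * m - c := by linarith [le_abs_self c]
  have hpos : 0 < a * m / 2 := by positivity
  rw [Real.norm_of_nonneg (by have := hpos.trans_le hlow; positivity),
    Real.norm_of_nonneg (by positivity)]
  calc (a * m - c)⁻¹ ≤ (a * m / 2)⁻¹ := inv_anti₀ hpos hlow
    _ = 2 / a * (m : ℝ)⁻¹ := by field_simp

lemma cast_choose_succ_div_choose_succ {a b r : ℕ} (ha : r ≤ a) (hb : r ≤ b) :
    ((a.choose (r + 1) : ℝ) / b.choose (r + 1))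
      = a.choose r / b.choose r * ((a - r) / (b - r)) := by
  have h {c : ℕ} (hc : r ≤ c) : (c.choose (r + 1) : ℝ) = c.choose r * (c - r) / (r + 1) := by
    rw [eq_div_iff (by positivity), ← Nat.cast_sub hc]
    exact mod_cast Nat.choose_succ_right_eq c r
  rw [h ha, h hb, div_div_div_cancel_right₀ (by positivity), mul_div_mul_comm]

lemma isBigO_choose_div_choose_sub (r : ℕ) :
    (fun m : ℕ ↦ ((m - 1).choose r : ℝ) / (2 * m - 1).choose r - (1 / 2) ^ r)
      =O[atTop] fun m ↦ (m : ℝ)⁻¹ := by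
  induction r with
  | zero => simpa using isBigO_zero _ _
  | succ r ih =>
    have hbdd : (fun m : ℕ ↦ ((m - 1).choose r : ℝ) / (2 * m - 1).choose r)
        =O[atTop] fun _ ↦ (1 : ℝ) := by
      refine IsBigO.of_bound 1 (Eventually.of_forall fun m ↦ ?_)
      rw [Real.norm_of_nonneg (by positivity), norm_one, one_mul]
      exact div_le_one_of_le₀ (by gcongr; lia) (by positivity)
    have hstep : (fun m : ℕ ↦ -((r + 1) / 2 : ℝ) * (2 * m - (r + 1) : ℝ)⁻¹)
        =O[atTop] fun m ↦ (m : ℝ)⁻¹ := (isBigO_mul_cast_sub_inv two_pos _).const_mul_left _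
    have hsum := (ih.const_mul_left (1 / 2)).add ((hbdd.mul hstep).congr_right fun _ ↦ one_mul _)
    refine hsum.congr' ?_ EventuallyEq.rfl
    filter_upwards [eventually_ge_atTop (r + 1)] with m hm
    have hm' : (r : ℝ) + 1 ≤ m := mod_cast hm
    have hne : 2 * (m : ℝ) - (r + 1) ≠ 0 := by linarith [r.cast_nonneg (α := ℝ)]
    have hfactor : ((m - 1 : ℕ) - r : ℝ) / ((2 * m - 1 : ℕ) - r)
        = 1 / 2 + -((r + 1) / 2) * (2 * m - (r + 1) : ℝ)⁻¹ := by
      rw [Nat.cast_pred (by lia), Nat.cast_pred (by lia), Nat.cast_mul, Nat.cast_ofNat, sub_sub,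
        sub_sub, add_comm 1 (r : ℝ), div_eq_iff hne, add_mul, inv_mul_cancel_right₀ hne]
      ring
    rw [cast_choose_succ_div_choose_succ (by lia) (by lia), hfactor]
    ring

lemma isBigO_inv_choose {k : ℕ} (hk : 2 ≤ k) :
    (fun n : ℕ ↦ ((n - 1).choose (k - 1) : ℝ)⁻¹) =O[atTop] fun n ↦ (n : ℝ)⁻¹ := by
  have hpred : (fun n : ℕ ↦ ((n : ℝ) - 1)⁻¹) =O[atTop] fun n ↦ (n : ℝ)⁻¹ := by
    simpa using isBigO_mul_cast_sub_inv one_pos 1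
  refine (IsBigO.of_bound (k - 1) ?_).trans hpred
  filter_upwards [eventually_ge_atTop k] with n hn
  have hn' : (2 : ℝ) ≤ n := mod_cast hk.trans hn
  have hchoose : (1 : ℝ) ≤ (n - 2).choose (k - 2) := mod_cast Nat.choose_pos (by lia)
  have hpos : (0 : ℝ) < (n - 1).choose (k - 1) := mod_cast Nat.choose_pos (by lia)
  have hsub : (0 : ℝ) < n - 1 := by linarith
  rw [Real.norm_of_nonneg (by positivity), Real.norm_of_nonneg (by positivity), ← div_eq_mul_inv,
    le_div_iff₀ hsub, inv_mul_le_iff₀ hpos, mul_comm, ← cast_sub_one_mul_choose (hk.trans hn) hk]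
  exact le_mul_of_one_le_right hsub.le hchoose

end BinomialAsymptotics

lemma exists_forall_le_add_mul_of_eventually {S : ℕ → Type*} [∀ m, Finite (S m)]
    {f : ∀ m, S m → ℝ} {a w : ℕ → ℝ} (hw : ∀ m, 0 ≤ w m) (hf : ∀ m s, w m = 0 → f m s ≤ a m)
    {C : ℝ} (hC : ∀ᶠ m in atTop, ∀ s, f m s ≤ a m + C * w m) :
    ∃ C', ∀ m s, f m s ≤ a m + C' * w m := by
  have hlocal (m : ℕ) : ∃ D, ∀ s, f m s ≤ a m + D * w m := by
    obtain hm | hm := (hw m).eq_or_lt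
    · exact ⟨0, fun s ↦ by simpa using hf m s hm.symm⟩
    · obtain ⟨D, hD⟩ := Finite.exists_le fun s ↦ (f m s - a m) / w m
      exact ⟨D, fun s ↦ by linarith [(div_le_iff₀ hm).1 (hD s)]⟩
  choose D hD using hlocal
  obtain ⟨N, hN⟩ := eventually_atTop.1 hC
  obtain ⟨B, hB⟩ := ((Set.finite_lt_nat N).image D).bddAbove
  refine ⟨max C B, fun m s ↦ ?_⟩
  obtain hm | hm := le_or_gt N m
  · grw [hN m hm s, ← le_max_left]
    exact hw m
  · grw [hD m s, hB ⟨m, hm, rfl⟩, ← le_max_right]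
    all_goals exact hw m

section ClusterLabels

variable {n : ℕ} (σ : Fin n → Bool)

lemma sgn_mul_self (i : Fin n) : sgn σ i * sgn σ i = 1 := by
  unfold sgn; split_ifs <;> norm_num

lemma abs_sgn (i : Fin n) : |sgn σ i| = 1 := by
  unfold sgn; split_ifs <;> norm_num

lemma sgn_comp_perm {σ} {f : Equiv.Perm (Fin n)} (hf : σ ∘ f = σ) (i : Fin n) :
    sgn σ (f i) = sgn σ i := by
  simp [sgn, show σ (f i) = σ i from congr_fun hf i]

/-- The signed size `1_eᵀ σ_e` of the hyperedge `e`. -/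
noncomputable def labelSum (e : Finset (Fin n)) : ℝ := ∑ i ∈ e, sgn σ i

lemma Amat_eq_sub (e : Finset (Fin n)) :
    Amat σ e = labelSum σ e • diagonal (sigE σ e) - vecMulVec (sigE σ e) (sigE σ e) := rfl

lemma isSymm_Amat (e : Finset (Fin n)) : (Amat σ e).IsSymm := by
  simp [Matrix.IsSymm, Amat_eq_sub]

lemma Amat_map_submatrix {σ} {f : Equiv.Perm (Fin n)} (hf : σ ∘ f = σ) (e : Finset (Fin n)) :
    (Amat σ (e.map f.toEmbedding)).submatrix f f = Amat σ e := by
  ext i j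
  simp [Amat, sigE, sgn_comp_perm hf, diagonal_apply]

lemma Amat_mul_self_apply (e : Finset (Fin n)) (i j : Fin n) :
    (Amat σ e * Amat σ e) i j = if i ∈ e ∧ j ∈ e then
      (if i = j then labelSum σ e ^ 2 else 0) - labelSum σ e * (sgn σ i + sgn σ j)
        + #e * (sgn σ i * sgn σ j) else 0 := by
  have hv : sigE σ e ⬝ᵥ sigE σ e = #e := by
    simp [dotProduct, sigE, sgn_mul_self]
  have hexpand : (Amat σ e * Amat σ e) i j
      = (if i = j then (labelSum σ e * sigE σ e i) ^ 2 else 0)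
        - labelSum σ e * (sigE σ e i * sigE σ e i * sigE σ e j)
        - labelSum σ e * (sigE σ e i * (sigE σ e j * sigE σ e j))
        + #e * (sigE σ e i * sigE σ e j) := by
    simp only [Amat_eq_sub, sub_mul, mul_sub, smul_mul_assoc, mul_smul_comm,
      diagonal_mul_diagonal, vecMulVec_mul_vecMulVec, hv, Matrix.sub_apply, Matrix.smul_apply,
      diagonal_apply, diagonal_mul, mul_diagonal, vecMulVec_apply, smul_eq_mul, Pi.smul_apply]
    split_ifs <;> ring
  rw [hexpand]
  by_cases hi : i ∈ e
  · by_cases hj : j ∈ e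
    · simp only [sigE, hi, hj, if_true, mul_pow, sq (sgn σ i), sgn_mul_self, and_self, mul_one]
      ring
    · simp [sigE, hi, hj, ne_of_mem_of_not_mem hi hj]
  · simp [sigE, hi]

lemma Amat_mul_self_apply_self {e : Finset (Fin n)} {j : Fin n} (hj : j ∈ e) :
    (Amat σ e * Amat σ e) j j = (labelSum σ e - sgn σ j) ^ 2 + (#e - 1) := by
  rw [Amat_mul_self_apply, if_pos ⟨hj, hj⟩, if_pos rfl]
  linear_combination (#e - 1 : ℝ) * sgn_mul_self σ j

lemma neg_card_le_Amat_mul_self_apply {σ} {e : Finset (Fin n)} {i j : Fin n} (hi : i ∈ e)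
    (hj : j ∈ e) (hne : i ≠ j) (hσ : σ i = σ j) : -(#e : ℝ) ≤ (Amat σ e * Amat σ e) i j := by
  have hsgn : sgn σ i = sgn σ j := by simp [sgn, hσ]
  have habs : |labelSum σ e * sgn σ j| ≤ #e := by
    rw [abs_mul, abs_sgn, mul_one]
    exact (abs_sum_le_sum_abs _ _).trans_eq (by simp [abs_sgn])
  rw [Amat_mul_self_apply, if_pos ⟨hi, hj⟩, if_neg hne, hsgn, sgn_mul_self]
  linarith [le_abs_self (labelSum σ e * sgn σ j)]

lemma edgeP_map {σ} {f : Equiv.Perm (Fin n)} (hf : σ ∘ f = σ) (p q : ℝ) (e : Finset (Fin n)) :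
    edgeP p q σ (e.map f.toEmbedding) = edgeP p q σ e := by
  have hσ (i : Fin n) : σ (f i) = σ i := congr_fun hf i
  simp only [edgeP, inCluster, forall_mem_map, Equiv.coe_toEmbedding, hσ]

lemma edgeP_eq_add (p q : ℝ) (e : Finset (Fin n)) :
    edgeP p q σ e = q + if inCluster σ e then p - q else 0 := by
  unfold edgeP; split_ifs <;> ring

lemma edgeP_nonneg {p q : ℝ} (hp : 0 ≤ p) (hq : 0 ≤ q) (e : Finset (Fin n)) :
    0 ≤ edgeP p q σ e := by
  unfold edgeP; split_ifs <;> assumption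

lemma edgeP_le_max (p q : ℝ) (e : Finset (Fin n)) : edgeP p q σ e ≤ max p q := by
  unfold edgeP; split_ifs <;> simp

/-- The matrix `∑_e P_e A_e²` over the `k`-subsets `e`: the variance matrix `varMat` with the
projections removed and `P_e (1 - P_e)` replaced by `P_e`. -/
noncomputable def secondMomentMat (k : ℕ) (p q : ℝ) : Matrix (Fin n) (Fin n) ℝ :=
  ∑ e ∈ powersetCard k univ, edgeP p q σ e • (Amat σ e * Amat σ e)

lemma secondMomentMat_submatrix {σ} {f : Equiv.Perm (Fin n)} (hf : σ ∘ f = σ) (k : ℕ)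
    (p q : ℝ) : (secondMomentMat σ k p q).submatrix f f = secondMomentMat σ k p q := by
  have hmul (e : Finset (Fin n)) : (Amat σ (e.map f.toEmbedding) *
      Amat σ (e.map f.toEmbedding)).submatrix f f = Amat σ e * Amat σ e := by
    rw [← submatrix_mul_equiv _ _ f f f, Amat_map_submatrix hf]
  ext i j
  simp only [secondMomentMat, submatrix_apply, Matrix.sum_apply, Matrix.smul_apply]
  rw [← sum_powersetCard_univ_map k f]
  exact sum_congr rfl fun e _ ↦ by rw [edgeP_map hf, ← hmul e, submatrix_apply]

lemma secondMomentMat_apply (k : ℕ) (p q : ℝ) (i j : Fin n) :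
    secondMomentMat σ k p q i j = ∑ e ∈ powersetCard k univ with i ∈ e ∧ j ∈ e,
      edgeP p q σ e * (Amat σ e * Amat σ e) i j := by
  rw [secondMomentMat, Matrix.sum_apply, sum_filter_of_ne]
  · rfl
  · intro e _ h
    by_contra hij
    simp [Amat_mul_self_apply, hij] at h

lemma secondMomentMat_apply_self_nonneg (k : ℕ) {p q : ℝ} (hp : 0 ≤ p) (hq : 0 ≤ q) (j : Fin n) :
    0 ≤ secondMomentMat σ k p q j j := by
  rw [secondMomentMat_apply]
  refine sum_nonneg fun e _ ↦ mul_nonneg (edgeP_nonneg σ hp hq e) ?_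
  rw [Matrix.mul_apply]
  refine sum_nonneg fun i _ ↦ ?_
  rw [(isSymm_Amat σ e).apply]
  exact mul_self_nonneg _

variable {σ}

lemma card_filter_inCluster {k : ℕ} (hk : 1 ≤ k) (j : Fin n) :
    #{e ∈ powersetCard k univ | j ∈ e ∧ inCluster σ e}
      = (#{i | σ i = σ j} - 1).choose (k - 1) := by
  rw [← card_singleton j,
    ← card_filter_powersetCard_subset {j} {i | σ i = σ j} k (by simp) (by simpa)]
  congr 1
  ext e
  simp only [mem_filter, mem_powersetCard_univ]
  simp only [mem_powersetCard, singleton_subset_iff]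
  simp only [subset_iff, mem_filter, mem_univ, true_and]
  exact ⟨fun ⟨hcard, hj, h⟩ ↦ ⟨⟨fun i hi ↦ h i hi j hj, hcard⟩, hj⟩,
    fun ⟨⟨h, hcard⟩, hj⟩ ↦ ⟨hcard, hj, fun i hi i' hi' ↦ (h hi).trans (h hi').symm⟩⟩

lemma labelSum_of_inCluster {e : Finset (Fin n)} {j : Fin n} (he : inCluster σ e) (hj : j ∈ e) :
    labelSum σ e = #e * sgn σ j := by
  rw [labelSum, sum_congr rfl fun i hi ↦ show sgn σ i = sgn σ j by simp [sgn, he i hi j hj],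
    sum_const, nsmul_eq_mul]

lemma sum_sgn_filter_mem_erase {e : Finset (Fin n)} {j : Fin n} (hj : j ∈ e) :
    ∑ i ∈ univ.erase j with i ∈ e, sgn σ i = labelSum σ e - sgn σ j := by
  rw [labelSum, ← sum_erase_eq_sub hj]
  exact sum_congr (by ext; simp) fun _ _ ↦ rfl

lemma sum_sq_labelSum_sub_sgn_le (hn : 2 ≤ n) {k : ℕ} (hk : 2 ≤ k) (hσ : ∑ i, sgn σ i = 0)
    (j : Fin n) :
    ∑ e ∈ powersetCard k univ with j ∈ e, (labelSum σ e - sgn σ j) ^ 2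
      ≤ (k - 1) * (n - 1).choose (k - 1) := by
  have hpair : ∀ a ∈ univ.erase j, #{e ∈ {e ∈ powersetCard k univ | j ∈ e} | a ∈ e}
      = (n - 2).choose (k - 2) := fun a ha ↦ by
    simpa [filter_filter, insert_subset_iff, card_pair (ne_of_mem_erase ha).symm, hk] using
      card_filter_subset_powersetCard_univ k {j, a}
  have htriple : ∀ a ∈ univ.erase j, ∀ b ∈ univ.erase j, a ≠ b →
      #{e ∈ {e ∈ powersetCard k univ | j ∈ e} | a ∈ e ∧ b ∈ e}
        = if 3 ≤ k then (n - 3).choose (k - 3) else 0 := fun a ha b hb hab ↦ by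
    have hcard : #{j, a, b} = 3 :=
      card_eq_three.2 ⟨j, a, b, (ne_of_mem_erase ha).symm, (ne_of_mem_erase hb).symm, hab, rfl⟩
    simpa [filter_filter, insert_subset_iff, hcard] using
      card_filter_subset_powersetCard_univ k {j, a, b}
  have hsum : ∑ i ∈ univ.erase j, sgn σ i = -sgn σ j := by
    rw [sum_erase_eq_sub (mem_univ j), hσ, zero_sub]
  rw [sum_congr rfl fun e he ↦ by rw [← sum_sgn_filter_mem_erase (mem_filter.1 he).2],
    sum_sq_sum_filter_mem hpair htriple, hsum, ← cast_sub_one_mul_choose hn hk]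
  simp only [sq, neg_mul_neg, sgn_mul_self, sum_const, card_erase_of_mem (mem_univ j),
    card_univ, Fintype.card_fin, nsmul_eq_mul, mul_one, Nat.cast_sub (one_le_two.trans hn),
    Nat.cast_one]
  have hn' : (2 : ℝ) ≤ n := by exact_mod_cast hn
  nlinarith [Nat.cast_nonneg (α := ℝ) (if 3 ≤ k then (n - 3).choose (k - 3) else 0)]

lemma secondMomentMat_apply_self_le (hn : 2 ≤ n) {k : ℕ} (hk : 2 ≤ k) (hσ : ∑ i, sgn σ i = 0)
    (p : ℝ) {q : ℝ} (hq : 0 ≤ q) (j : Fin n) :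
    secondMomentMat σ k p q j j ≤ q * (2 * (k - 1) * (n - 1).choose (k - 1))
      + (p - q) * (k * (k - 1) * (#{i | σ i = σ j} - 1).choose (k - 1)) := by
  have hall : ∑ e ∈ powersetCard k univ with j ∈ e, ((labelSum σ e - sgn σ j) ^ 2 + ((k : ℝ) - 1))
      ≤ 2 * ((k : ℝ) - 1) * (n - 1).choose (k - 1) := by
    have hcard : #{e ∈ powersetCard k (univ : Finset (Fin n)) | j ∈ e}
        = (n - 1).choose (k - 1) := by
      simpa [show 1 ≤ k by lia] using card_filter_subset_powersetCard_univ k {j}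
    rw [sum_add_distrib, sum_const, hcard, nsmul_eq_mul]
    linarith [sum_sq_labelSum_sub_sgn_le hn hk hσ j]
  have hin : ∑ e ∈ powersetCard k univ with j ∈ e ∧ inCluster σ e,
      ((labelSum σ e - sgn σ j) ^ 2 + ((k : ℝ) - 1))
      = k * ((k : ℝ) - 1) * (#{i | σ i = σ j} - 1).choose (k - 1) := by
    rw [← card_filter_inCluster (by lia : 1 ≤ k), mul_comm, ← nsmul_eq_mul, ← sum_const]
    refine sum_congr rfl fun e he ↦ ?_
    obtain ⟨hek, hj, hin⟩ := mem_filter.1 he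
    rw [labelSum_of_inCluster hin hj, mem_powersetCard_univ.1 hek]
    linear_combination ((k : ℝ) - 1) ^ 2 * sgn_mul_self σ j
  calc secondMomentMat σ k p q j j
      = ∑ e ∈ powersetCard k univ with j ∈ e,
          edgeP p q σ e * ((labelSum σ e - sgn σ j) ^ 2 + ((k : ℝ) - 1)) := by
        simp only [secondMomentMat_apply, and_self]
        refine sum_congr rfl fun e he ↦ ?_
        obtain ⟨hek, hj⟩ := mem_filter.1 he
        rw [Amat_mul_self_apply_self σ hj, mem_powersetCard_univ.1 hek]
    _ = q * ∑ e ∈ powersetCard k univ with j ∈ e, ((labelSum σ e - sgn σ j) ^ 2 + ((k : ℝ) - 1))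
          + (p - q) * ∑ e ∈ powersetCard k univ with j ∈ e ∧ inCluster σ e,
            ((labelSum σ e - sgn σ j) ^ 2 + ((k : ℝ) - 1)) := by
        simp only [edgeP_eq_add, add_mul, ite_mul, zero_mul, sum_add_distrib, ← mul_sum,
          ← sum_filter, filter_filter]
    _ ≤ _ := by rw [hin]; gcongr

lemma neg_le_secondMomentMat_apply {p q : ℝ} (hp : 0 ≤ p) (hq : 0 ≤ q) {k : ℕ} (hk : 2 ≤ k)
    {i j : Fin n} (hne : i ≠ j) (h : σ i = σ j) :
    -(max p q * (k * (n - 2).choose (k - 2))) ≤ secondMomentMat σ k p q i j := by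
  have hpair : #{e ∈ powersetCard k (univ : Finset (Fin n)) | i ∈ e ∧ j ∈ e}
      = (n - 2).choose (k - 2) := by
    simpa [insert_subset_iff, card_pair hne, hk] using
      card_filter_subset_powersetCard_univ k {i, j}
  calc -(max p q * (k * (n - 2).choose (k - 2)))
      = ∑ e ∈ powersetCard k (univ : Finset (Fin n)) with i ∈ e ∧ j ∈ e, max p q * -(k : ℝ) := by
        rw [sum_const, hpair, nsmul_eq_mul]; ring
    _ ≤ secondMomentMat σ k p q i j := by
        rw [secondMomentMat_apply]
        refine sum_le_sum fun e he ↦ ?_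
        obtain ⟨hek, hi, hj⟩ := mem_filter.1 he
        have hA := neg_card_le_Amat_mul_self_apply hi hj hne h
        rw [mem_powersetCard_univ.1 hek] at hA
        calc max p q * -(k : ℝ) ≤ edgeP p q σ e * -k :=
              mul_le_mul_of_nonpos_right (edgeP_le_max σ p q e) (by simp)
          _ ≤ edgeP p q σ e * (Amat σ e * Amat σ e) i j :=
              mul_le_mul_of_nonneg_left hA (edgeP_nonneg σ hp hq e)

end ClusterLabels

section Projection

variable {n : ℕ} {σ : Fin n → Bool}

lemma PiM_eq_sub (σ : Fin n → Bool) :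
    PiM σ = 1 - (n : ℝ)⁻¹ • vecMulVec 1 1 - (n : ℝ)⁻¹ • vecMulVec (sgn σ) (sgn σ) := by
  ext i j
  simp [PiM, outer, vecMulVec_apply]

lemma isSymm_PiM (σ : Fin n → Bool) : (PiM σ).IsSymm := by
  simp only [Matrix.IsSymm, PiM_eq_sub, transpose_sub, transpose_smul, transpose_one,
    transpose_vecMulVec]

lemma PiM_mulVec_one (hn : n ≠ 0) (hσ : ∑ i, sgn σ i = 0) : PiM σ *ᵥ 1 = 0 := by
  have hn' : (n : ℝ) ≠ 0 := Nat.cast_ne_zero.2 hn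
  simp only [PiM_eq_sub, sub_mulVec, one_mulVec, smul_mulVec, vecMulVec_mulVec, dotProduct_one, hσ,
    op_smul_eq_smul]
  simp [smul_smul, hn']

lemma PiM_mulVec_sgn (hn : n ≠ 0) (hσ : ∑ i, sgn σ i = 0) : PiM σ *ᵥ sgn σ = 0 := by
  have hn' : (n : ℝ) ≠ 0 := Nat.cast_ne_zero.2 hn
  have hnorm : sgn σ ⬝ᵥ sgn σ = n := by simp [dotProduct, sgn_mul_self]
  simp only [PiM_eq_sub, sub_mulVec, one_mulVec, smul_mulVec, vecMulVec_mulVec, one_dotProduct, hσ,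
    hnorm, op_smul_eq_smul]
  simp [smul_smul, hn']

lemma isStarProjection_PiM (hn : n ≠ 0) (hσ : ∑ i, sgn σ i = 0) : IsStarProjection (PiM σ) where
  isIdempotentElem := by
    unfold IsIdempotentElem
    nth_rw 2 [PiM_eq_sub]
    simp only [mul_sub, mul_one, Matrix.mul_smul, mul_vecMulVec, PiM_mulVec_one hn hσ,
      PiM_mulVec_sgn hn hσ, zero_vecMulVec, smul_zero, sub_zero]
  isSelfAdjoint := isHermitian_iff_isSymm.2 (isSymm_PiM σ)

lemma sum_filter_eq_zero_of_orthogonal {y : Fin n → ℝ} (hone : ∑ i, y i = 0)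
    (hsgn : sgn σ ⬝ᵥ y = 0) (b : Bool) : ∑ i with σ i = b, y i = 0 := by
  have h (ε : ℝ) (hε : ∀ i, 1 + ε * sgn σ i = if σ i = b then 2 else 0) :
      ∑ i with σ i = b, y i = 0 := by
    suffices 2 * ∑ i with σ i = b, y i = 0 by linarith
    calc 2 * ∑ i with σ i = b, y i = ∑ i, (y i + ε * (sgn σ i * y i)) := by
          rw [mul_sum, sum_filter]
          exact sum_congr rfl fun i _ ↦ by rw [← mul_assoc, ← one_add_mul, hε, ite_mul, zero_mul]
      _ = 0 := by rw [sum_add_distrib, hone, ← mul_sum, ← dotProduct, hsgn]; simp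
  cases b
  · exact h (-1) fun i ↦ by cases hi : σ i <;> norm_num [sgn, hi]
  · exact h 1 fun i ↦ by cases hi : σ i <;> norm_num [sgn, hi]

lemma sum_filter_PiM_mulVec (hn : n ≠ 0) (hσ : ∑ i, sgn σ i = 0) (x : Fin n → ℝ) (b : Bool) :
    ∑ i with σ i = b, (PiM σ *ᵥ x) i = 0 := by
  refine sum_filter_eq_zero_of_orthogonal ?_ ?_ b
  · rw [← one_dotProduct, dotProduct_mulVec_of_isSymm (isSymm_PiM σ), PiM_mulVec_one hn hσ,
      zero_dotProduct]
  · rw [dotProduct_mulVec_of_isSymm (isSymm_PiM σ), PiM_mulVec_sgn hn hσ, zero_dotProduct]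

end Projection

section VarianceMatrix

variable {n : ℕ} {σ : Fin n → Bool} {k : ℕ} {p q : ℝ}

lemma varMat_eq_sum_powersetCard (k : ℕ) (p q : ℝ) (σ : Fin n → Bool) :
    varMat n k p q σ = ∑ e ∈ powersetCard k univ, (edgeP p q σ e * (1 - edgeP p q σ e)) •
      ((PiM σ * Amat σ e * PiM σ) * (PiM σ * Amat σ e * PiM σ)) :=
  (sum_subtype _ (fun _ ↦ mem_powersetCard_univ) fun e ↦ (edgeP p q σ e * (1 - edgeP p q σ e)) •
    ((PiM σ * Amat σ e * PiM σ) * (PiM σ * Amat σ e * PiM σ))).symm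

lemma isSymm_PiM_mul_Amat_mul_PiM (σ : Fin n → Bool) (e : Finset (Fin n)) :
    (PiM σ * Amat σ e * PiM σ).IsSymm := by
  simp [Matrix.IsSymm, transpose_mul, (isSymm_PiM σ).eq, (isSymm_Amat σ e).eq, mul_assoc]

lemma posSemidef_varMat (hp : p ∈ Set.Icc 0 1) (hq : q ∈ Set.Icc 0 1) (k : ℕ)
    (σ : Fin n → Bool) : (varMat n k p q σ).PosSemidef := by
  rw [varMat_eq_sum_powersetCard]
  refine posSemidef_sum _ fun e _ ↦ PosSemidef.smul ?_ ?_
  · simpa [conjTranspose_eq_transpose_of_trivial, (isSymm_PiM_mul_Amat_mul_PiM σ e).eq] using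
      posSemidef_conjTranspose_mul_self (PiM σ * Amat σ e * PiM σ)
  · exact mul_nonneg (edgeP_nonneg σ hp.1 hq.1 e)
      (sub_nonneg.2 ((edgeP_le_max σ p q e).trans (max_le hp.2 hq.2)))

lemma dotProduct_varMat_mulVec_le (hn : n ≠ 0) (hσ : ∑ i, sgn σ i = 0) (hp : 0 ≤ p)
    (hq : 0 ≤ q) (k : ℕ) (x : Fin n → ℝ) :
    x ⬝ᵥ varMat n k p q σ *ᵥ x
      ≤ PiM σ *ᵥ x ⬝ᵥ secondMomentMat σ k p q *ᵥ (PiM σ *ᵥ x) := by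
  simp only [varMat_eq_sum_powersetCard, secondMomentMat, sum_mulVec, dotProduct_sum, smul_mulVec,
    dotProduct_smul, smul_eq_mul]
  refine sum_le_sum fun e _ ↦ ?_
  set y := Amat σ e *ᵥ PiM σ *ᵥ x with hy
  have hvar : x ⬝ᵥ (PiM σ * Amat σ e * PiM σ * (PiM σ * Amat σ e * PiM σ)) *ᵥ x
      = PiM σ *ᵥ y ⬝ᵥ PiM σ *ᵥ y := by
    rw [← mulVec_mulVec, dotProduct_mulVec_of_isSymm (isSymm_PiM_mul_Amat_mul_PiM σ e)]
    simp only [hy, mulVec_mulVec, mul_assoc]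
  have hmom : PiM σ *ᵥ x ⬝ᵥ (Amat σ e * Amat σ e) *ᵥ PiM σ *ᵥ x = y ⬝ᵥ y := by
    rw [← mulVec_mulVec, dotProduct_mulVec_of_isSymm (isSymm_Amat σ e)]
  rw [hvar, hmom]
  refine mul_le_mul ?_ ?_ (dotProduct_self_star_nonneg _) (edgeP_nonneg σ hp hq e)
  · exact mul_le_of_le_one_right (edgeP_nonneg σ hp hq e)
      (sub_le_self _ (edgeP_nonneg σ hp hq e))
  · exact mulVec_dotProduct_mulVec_le_of_isStarProjection (isStarProjection_PiM hn hσ) y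

lemma opNorm_varMat_le (hn : n ≠ 0) (hσ : ∑ i, sgn σ i = 0) (hp : p ∈ Set.Icc 0 1)
    (hq : q ∈ Set.Icc 0 1) {b : ℝ} (hb₀ : 0 ≤ b) (hb : ∀ j, ∃ j', j' ≠ j ∧ σ j' = σ j ∧
      secondMomentMat σ k p q j j - secondMomentMat σ k p q j j' ≤ b) :
    opNorm (varMat n k p q σ) ≤ b := by
  refine opNorm_le_of_posSemidef (posSemidef_varMat hp hq k σ) hb₀ fun x ↦ ?_
  calc x ⬝ᵥ varMat n k p q σ *ᵥ x
      ≤ PiM σ *ᵥ x ⬝ᵥ secondMomentMat σ k p q *ᵥ (PiM σ *ᵥ x) :=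
        dotProduct_varMat_mulVec_le hn hσ hp.1 hq.1 k x
    _ ≤ b * (PiM σ *ᵥ x ⬝ᵥ PiM σ *ᵥ x) :=
        dotProduct_mulVec_le_of_submatrix_perm_eq
          (fun _ hf ↦ secondMomentMat_submatrix hf k p q) (sum_filter_PiM_mulVec hn hσ x) hb
    _ ≤ b * (x ⬝ᵥ x) := by
        gcongr
        exact mulVec_dotProduct_mulVec_le_of_isStarProjection (isStarProjection_PiM hn hσ) x

end VarianceMatrix

section Balanced

lemma sum_sgn_eq_zero_of_balanced {n : ℕ} {σ : Fin n → Bool} (hσ : balanced σ) :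
    ∑ i, sgn σ i = 0 := by
  have hsgn (i) : sgn σ i = 2 * (if σ i = true then 1 else 0) - 1 := by
    unfold sgn
    split_ifs <;> norm_num
  have hcard : 2 * (#{i | σ i = true} : ℝ) = n := mod_cast hσ
  simp only [hsgn, sum_sub_distrib, ← mul_sum, sum_boole, hcard]
  simp

lemma two_mul_card_filter_eq_of_balanced {n : ℕ} {σ : Fin n → Bool} (hσ : balanced σ) (b : Bool) :
    2 * #{i | σ i = b} = n := by
  have hsplit := card_filter_add_card_filter_not (s := univ) fun i ↦ σ i = true
  simp only [Bool.not_eq_true, card_univ, Fintype.card_fin] at hsplit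
  cases b <;> lia

variable {m : ℕ} {σ : Fin (2 * m) → Bool}

lemma exists_ne_apply_eq_of_balanced (hσ : balanced σ) (hm : 2 ≤ m) (j : Fin (2 * m)) :
    ∃ j' ≠ j, σ j' = σ j := by
  have hcard := two_mul_card_filter_eq_of_balanced hσ (σ j)
  obtain ⟨j', hj', hne⟩ := exists_mem_ne (s := {i | σ i = σ j}) (by lia) j
  exact ⟨j', hne, (mem_filter.1 hj').2⟩

lemma opNorm_varMat_le_of_balanced (hσ : balanced σ) (hm : 2 ≤ m) {k : ℕ} (hk : 2 ≤ k) {p q : ℝ}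
    (hp : p ∈ Set.Icc 0 1) (hq : q ∈ Set.Icc 0 1) :
    opNorm (varMat (2 * m) k p q σ) ≤ q * (2 * (k - 1) * (2 * m - 1).choose (k - 1))
      + (p - q) * (k * (k - 1) * (m - 1).choose (k - 1))
      + max p q * (k * (2 * m - 2).choose (k - 2)) := by
  have hσ₀ := sum_sgn_eq_zero_of_balanced hσ
  have hdiag (j : Fin (2 * m)) := secondMomentMat_apply_self_le (by lia) hk hσ₀ p hq.1 j
  have hcard (j : Fin (2 * m)) : #{i | σ i = σ j} = m := by
    have := two_mul_card_filter_eq_of_balanced hσ (σ j)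
    lia
  simp only [hcard] at hdiag
  refine opNorm_varMat_le (by lia) hσ₀ hp hq ?_ fun j ↦ ?_
  · have hnonneg := secondMomentMat_apply_self_nonneg σ k hp.1 hq.1
    have hmax : 0 ≤ max p q * (k * (2 * m - 2).choose (k - 2)) :=
      mul_nonneg (hp.1.trans (le_max_left p q)) (by positivity)
    exact add_nonneg ((hnonneg _).trans (hdiag ⟨0, by lia⟩)) hmax
  · obtain ⟨j', hne, hj'⟩ := exists_ne_apply_eq_of_balanced hσ hm j
    have hoff := neg_le_secondMomentMat_apply hp.1 hq.1 hk hne.symm hj'.symm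
    exact ⟨j', hne, hj', by linarith [hdiag j]⟩

end Balanced

section Asymptotics

open Asymptotics
open scoped Topology

lemma tendsto_pParam_zero {k : ℕ} (hk : 2 ≤ k) (α : ℝ) : Tendsto (pParam k α) atTop (𝓝 0) := by
  have hlog : Tendsto (fun n : ℕ ↦ Real.log n * (n : ℝ)⁻¹) atTop (𝓝 0) :=
    Real.isLittleO_log_id_atTop.tendsto_div_nhds_zero.comp tendsto_natCast_atTop_atTop
  have hbound := (isBigO_refl (fun n : ℕ ↦ Real.log n) atTop).mul (isBigO_inv_choose hk)
  refine ((hbound.const_mul_left α).congr_left fun n ↦ ?_).trans_tendsto hlog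
  rw [pParam, mul_div_assoc, div_eq_mul_inv]

lemma eventually_pParam_mem_Icc {k : ℕ} (hk : 2 ≤ k) {α : ℝ} (hα : 0 ≤ α) :
    ∀ᶠ n in atTop, pParam k α n ∈ Set.Icc 0 1 := by
  filter_upwards [(tendsto_pParam_zero hk α).eventually_le_const one_pos] with n hn
  exact ⟨div_nonneg (mul_nonneg hα (Real.log_natCast_nonneg n)) (Nat.cast_nonneg _), hn⟩

/-- The coefficient of `log n` in the bound on the variance parameter at `n = 2 * m`, before the
passage to the limit. -/
noncomputable def varianceRate (k : ℕ) (α β : ℝ) (m : ℕ) : ℝ :=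
  2 * (k - 1) * β
    + (α - β) * (k * (k - 1)) * ((m - 1).choose (k - 1) / (2 * m - 1).choose (k - 1))
    + max α β * (k * (k - 1)) * (2 * m - 1 : ℝ)⁻¹

lemma eventually_opNorm_varMat_le {k : ℕ} (hk : 2 ≤ k) {α β : ℝ} (hα : 0 ≤ α) (hβ : 0 ≤ β) :
    ∀ᶠ m : ℕ in atTop, ∀ σ : Fin (2 * m) → Bool, balanced σ →
      opNorm (varMat (2 * m) k (pParam k α (2 * m)) (pParam k β (2 * m)) σ)
        ≤ varianceRate k α β m * Real.log (2 * m) := by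
  have htwo : Tendsto (fun m : ℕ ↦ 2 * m) atTop atTop := tendsto_id.const_mul_atTop' two_pos
  filter_upwards [htwo.eventually (eventually_pParam_mem_Icc hk hα),
    htwo.eventually (eventually_pParam_mem_Icc hk hβ), eventually_ge_atTop k] with m hp hq hm σ hσ
  refine (opNorm_varMat_le_of_balanced hσ (hk.trans hm) hk hp hq).trans_eq ?_
  have hm' : (2 : ℝ) ≤ m := mod_cast hk.trans hm
  have hpos : (0 : ℝ) < (2 * m - 1).choose (k - 1) := mod_cast Nat.choose_pos (by lia)
  have hpair : ((2 * m - 2).choose (k - 2) : ℝ)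
      = (k - 1) * (2 * m - 1).choose (k - 1) * (2 * m - 1 : ℝ)⁻¹ := by
    rw [← div_eq_mul_inv, eq_div_iff (by linarith), mul_comm,
      ← cast_sub_one_mul_choose (by lia) hk, Nat.cast_mul, Nat.cast_ofNat]
  have hmax : max (pParam k α (2 * m)) (pParam k β (2 * m))
      = max α β * (Real.log (2 * m) / (2 * m - 1).choose (k - 1)) := by
    rw [max_mul_of_nonneg]
    · simp [pParam, mul_div_assoc]
    · exact div_nonneg (Real.log_nonneg (by linarith)) hpos.le
  rw [hmax, hpair, varianceRate, pParam, pParam, Nat.cast_mul, Nat.cast_ofNat]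
  field_simp

lemma isBigO_varianceRate_sub {k : ℕ} (hk : 1 ≤ k) (α β : ℝ) :
    (fun m ↦ varianceRate k α β m - 2 * (k - 1) * (k / 2 ^ k * α + (1 - k / 2 ^ k) * β))
      =O[atTop] fun m ↦ (m : ℝ)⁻¹ := by
  have hratio := (isBigO_choose_div_choose_sub (k - 1)).const_mul_left ((α - β) * (k * (k - 1)))
  have hinv := (isBigO_mul_cast_sub_inv two_pos 1).const_mul_left (max α β * (k * (k - 1)))
  refine (hratio.add hinv).congr_left fun m ↦ ?_
  have hpow : (2 : ℝ) ^ k = 2 * 2 ^ (k - 1) := by rw [← pow_succ', Nat.sub_add_cancel hk]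
  rw [varianceRate, hpow, _root_.one_div_pow]
  field_simp
  ring

lemma exists_eventually_varianceRate_mul_log_le {k : ℕ} (hk : 1 ≤ k) (α β : ℝ) :
    ∃ C, ∀ᶠ m : ℕ in atTop, varianceRate k α β m * Real.log (2 * m)
      ≤ 2 * (k - 1) * (k / 2 ^ k * α + (1 - k / 2 ^ k) * β) * Real.log (2 * m)
        + C * (Real.log (2 * m) / ((2 * m : ℕ) : ℝ)) := by
  obtain ⟨C, hC⟩ := (isBigO_varianceRate_sub hk α β).bound
  refine ⟨2 * C, ?_⟩
  filter_upwards [hC, eventually_ge_atTop 1] with m hm hm₁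
  have hm₁' : (1 : ℝ) ≤ m := mod_cast hm₁
  have hlog : 0 ≤ Real.log (2 * m) := Real.log_nonneg (by linarith)
  rw [Real.norm_eq_abs, Real.norm_of_nonneg (by positivity)] at hm
  calc varianceRate k α β m * Real.log (2 * m)
      ≤ (2 * (k - 1) * (k / 2 ^ k * α + (1 - k / 2 ^ k) * β) + C * (m : ℝ)⁻¹)
        * Real.log (2 * m) := by
        gcongr
        linarith [le_abs_self
          (varianceRate k α β m - 2 * (k - 1) * (k / 2 ^ k * α + (1 - k / 2 ^ k) * β))]
    _ = _ := by
        push_cast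
        field_simp

end Asymptotics

/-- For balanced `σ`, the variance parameter satisfies
`σ² ≤ 2(k-1)((k/2^k)α + (1-k/2^k)β) log n + O(log n / n)`. -/
theorem variance_parameter_bound (k : ℕ) (hk : 2 ≤ k) (α β : ℝ) (hα : 0 < α) (hβ : 0 < β) :
    ∃ C : ℝ, ∀ m : ℕ, ∀ σ : Fin (2 * m) → Bool, balanced σ →
      opNorm (varMat (2 * m) k (pParam k α (2 * m)) (pParam k β (2 * m)) σ)
        ≤ 2 * ((k : ℝ) - 1) * (((k : ℝ) / 2 ^ k) * α + (1 - (k : ℝ) / 2 ^ k) * β) *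
            Real.log (2 * m)
          + C * (Real.log (2 * m) / ((2 * m : ℕ) : ℝ)) := by
  have hw (m : ℕ) : 0 ≤ Real.log (2 * m) / ((2 * m : ℕ) : ℝ) :=
    div_nonneg (by simpa using Real.log_natCast_nonneg (2 * m)) (Nat.cast_nonneg _)
  have hw₀ (m : ℕ) (hm : Real.log (2 * m) / ((2 * m : ℕ) : ℝ) = 0) : m = 0 := by
    by_contra hm₀
    have hm₁ : (1 : ℝ) ≤ m := mod_cast Nat.one_le_iff_ne_zero.2 hm₀
    have hlog : 0 < Real.log (2 * m) := Real.log_pos (by linarith)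
    simp [hlog.ne', hm₀] at hm
  obtain ⟨C, hC⟩ := exists_eventually_varianceRate_mul_log_le (one_le_two.trans hk) α β
  have hlarge := ((eventually_opNorm_varMat_le hk hα.le hβ.le).and hC).mono
    fun m h (σ : {σ : Fin (2 * m) → Bool // balanced σ}) ↦ (h.1 σ σ.2).trans h.2
  obtain ⟨C', hC'⟩ := exists_forall_le_add_mul_of_eventually hw (fun m σ hm ↦ by
    obtain rfl := hw₀ m hm
    simp [opNorm_eq_zero_of_isEmpty]) hlarge
  exact ⟨C', fun m σ hσ ↦ hC' m ⟨σ, hσ⟩⟩
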